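/- arXiv:1012.5043 — 3 statements merged into one kernel-verified Lean document; each statement's English description precedes it below -/
import Mathlib

section
/- There exists a universal constant C > 0 such that for every power of 2 n ≥ 2, every positive integer c, and every classical deterministic one-way protocol for the Hidden Matching problem HM(n) using c bits of communication (message function μ : {0,1}^n → {0,1}^c and Bob's output function mapping each message m and each perfect matching M to a pair (i,j) ∈ M and a bit v), the winning probability Pr[v = x_i ⊕ x_j] over uniformly random x ∈ {0,1}^n and a uniformly random perfect matching M is at most 1/2 + C·c/√n. -/
open scoped Classical
open Finset

/-- A perfect matching on `Fin n`, represented as a fixed-point-free involution: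
the pair `(i, M i)` is matched for every `i`. -/
def Matching (n : ℕ) : Type :=
  {M : Fin n → Fin n // (∀ i, M (M i) = i) ∧ ∀ i, M i ≠ i}

noncomputable instance (n : ℕ) : Fintype (Matching n) :=
  Subtype.fintype _

/-!
Bob's guess for a pair `(i, j)` after message `m` gains over `1 / 2` only the correlation `T m i j`
of `x i ⊕ x j` with the event that the message is `m`. The partner of a vertex in a uniformly
random matching is uniform among the `n - 1` other vertices, so by Cauchy-Schwarz the expected
gain is at most half of `(∑ m, ‖T m‖) / √(n - 1)`, where `‖·‖` is the Frobenius norm.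

To bound `∑ m, ‖T m‖`, pair each `T m` with the quadratic form `q m` in the signs `(-1) ^ x i`
whose coefficients are those of `T m`, normalized to Frobenius norm `1 / 4`. Then
`∑ m, ‖T m‖ = 4 * 𝔼 x, q (μ x) x`, and since `𝔼 x, exp (q m x)` is bounded by a constant for every
`m`, Jensen's inequality gives `𝔼 x, q (μ x) x ≤ log (number of messages) + O(1)`. The exponential
moment is bounded by averaging out one sign at a time: a sign multiplying a linear form `L`
contributes `cosh L ≤ exp (L ^ 2 / 2)`, which is again a quadratic form in the remaining signs.
-/

open scoped BigOperators Matrix.Norms.Frobenius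

variable {ι Msg : Type*} [Fintype ι]

/-- The sign `(-1) ^ b` of a bit, which turns the exclusive or into a product. -/
def boolSign (b : Bool) : ℝ := if b then -1 else 1

lemma boolSign_mul_self (b : Bool) : boolSign b * boolSign b = 1 := by
  cases b <;> norm_num [boolSign]

lemma abs_boolSign (b : Bool) : |boolSign b| = 1 := by
  cases b <;> norm_num [boolSign]

lemma ite_eq_xor (v a b : Bool) :
    (if v = xor a b then (1 : ℝ) else 0)
      = 1 / 2 + boolSign v * (boolSign a * boolSign b) / 2 := by
  cases v <;> cases a <;> cases b <;> norm_num [boolSign]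

lemma frobenius_norm_sq {κ : Type*} [Fintype κ] (B : Matrix ι κ ℝ) :
    ‖B‖ ^ 2 = ∑ i, ∑ j, B i j ^ 2 := by
  rw [Matrix.frobenius_norm_def, ← Real.sqrt_eq_rpow, Real.sq_sqrt (by positivity)]
  simp

lemma frobenius_norm_vecMulVec_self (d : ι → ℝ) : ‖Matrix.vecMulVec d d‖ = d ⬝ᵥ d := by
  have hd : 0 ≤ d ⬝ᵥ d := dotProduct_self_star_nonneg d
  rw [← sq_eq_sq₀ (norm_nonneg _) hd, frobenius_norm_sq, dotProduct, sq, Finset.sum_mul_sum]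
  simp only [Matrix.vecMulVec_apply]
  exact Finset.sum_congr rfl fun i _ => Finset.sum_congr rfl fun j _ => by ring

/-- The Rademacher chaos of order two with coefficients `B`: the quadratic form of `B` at the
sign vector of the bit string `x`. -/
def rademacherChaos (B : Matrix ι ι ℝ) (x : ι → Bool) : ℝ :=
  ∑ i, ∑ j, B i j * (boolSign (x i) * boolSign (x j))

lemma expect_option_bool [DecidableEq ι] (f : (Option ι → Bool) → ℝ) :
    𝔼 x, f x = 𝔼 y : ι → Bool,
      (f (fun o => o.elim true y) + f (fun o => o.elim false y)) / 2 := by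
  have hprod : 𝔼 x, f x = 𝔼 p : Bool × (ι → Bool), f (fun o => o.elim p.1 p.2) :=
    (Fintype.expect_equiv (Equiv.piOptionEquivProd (β := fun _ => Bool)).symm _ _ fun p =>
      congrArg f (funext fun o => by cases o <;> rfl)).symm
  rw [hprod, ← Finset.univ_product_univ, Finset.expect_product, Finset.expect_comm]
  simp only [Fintype.expect_eq_sum_div_card (ι := Bool), Fintype.sum_bool, Fintype.card_bool,
    Nat.cast_ofNat]

section IntegrateOut

variable (B : Matrix (Option ι) (Option ι) ℝ)

/-- The coefficients of the linear form by which the sign at `none` is multiplied in the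
chaos of `B`. -/
def couplingVec (i : ι) : ℝ := B none (some i) + B (some i) none

/-- The coefficients of a chaos in the remaining signs that dominates the chaos of `B` once the
sign at `none` is averaged out of its exponential moment. -/
noncomputable def integrateOut : Matrix ι ι ℝ :=
  B.submatrix some some + (1 / 2 : ℝ) • Matrix.vecMulVec (couplingVec B) (couplingVec B)

lemma rademacherChaos_option (x : Option ι → Bool) :
    rademacherChaos B x = B none none + rademacherChaos (B.submatrix some some) (x ∘ some)
      + boolSign (x none) * ∑ i, couplingVec B i * boolSign (x (some i)) := by
  have hrow (i : ι) : B none (some i) * (boolSign (x none) * boolSign (x (some i)))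
      = boolSign (x none) * (B none (some i) * boolSign (x (some i))) := by ring
  have hcol (i : ι) : B (some i) none * (boolSign (x (some i)) * boolSign (x none))
      = boolSign (x none) * (B (some i) none * boolSign (x (some i))) := by ring
  simp only [rademacherChaos, couplingVec, Fintype.sum_option, boolSign_mul_self,
    Finset.sum_add_distrib, Finset.mul_sum, Matrix.submatrix_apply, Function.comp_apply,
    add_mul, mul_add, hrow, hcol]
  ring

lemma rademacherChaos_integrateOut (y : ι → Bool) :
    rademacherChaos (integrateOut B) y = rademacherChaos (B.submatrix some some) y
      + (∑ i, couplingVec B i * boolSign (y i)) ^ 2 / 2 := by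
  rw [sq, Finset.sum_mul_sum]
  simp only [rademacherChaos, integrateOut, Finset.sum_div, ← Finset.sum_add_distrib,
    Matrix.add_apply, Matrix.smul_apply, Matrix.vecMulVec_apply, smul_eq_mul]
  exact Finset.sum_congr rfl fun i _ => Finset.sum_congr rfl fun j _ => by ring

lemma expect_exp_rademacherChaos_option_le [DecidableEq ι] :
    𝔼 x, Real.exp (rademacherChaos B x)
      ≤ Real.exp (B none none) * 𝔼 y, Real.exp (rademacherChaos (integrateOut B) y) := by
  rw [expect_option_bool, Finset.mul_expect]
  refine Finset.expect_le_expect fun y _ => ?_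
  set L := ∑ i, couplingVec B i * boolSign (y i)
  set Q := rademacherChaos (B.submatrix some some) y
  have hchaos (b : Bool) : rademacherChaos B (fun o => o.elim b y)
      = B none none + Q + boolSign b * L := rademacherChaos_option B _
  calc
    _ = Real.exp (B none none + Q) * Real.cosh L := by
      rw [hchaos, hchaos, Real.cosh_eq]
      simp only [boolSign, if_true, Bool.false_eq_true, if_false, one_mul, neg_mul, Real.exp_add]
      ring
    _ ≤ Real.exp (B none none + Q) * Real.exp (L ^ 2 / 2) := by
      gcongr
      exact Real.cosh_le_exp_half_sq L
    _ = _ := by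
      rw [rademacherChaos_integrateOut, ← Real.exp_add, ← Real.exp_add, add_assoc]

lemma trace_integrateOut :
    (integrateOut B).trace
      = (B.submatrix some some).trace + couplingVec B ⬝ᵥ couplingVec B / 2 := by
  rw [integrateOut, Matrix.trace_add, Matrix.trace_smul, Matrix.trace_vecMulVec, smul_eq_mul]
  ring

lemma couplingVec_dotProduct_self_le :
    couplingVec B ⬝ᵥ couplingVec B ≤ 2 * (‖B‖ ^ 2 - ‖B.submatrix some some‖ ^ 2) := by
  have hpair : couplingVec B ⬝ᵥ couplingVec B
      ≤ ∑ i, 2 * (B none (some i) ^ 2 + B (some i) none ^ 2) := by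
    refine Finset.sum_le_sum fun i _ => ?_
    simp only [couplingVec]
    nlinarith [sq_nonneg (B none (some i) - B (some i) none)]
  rw [← Finset.mul_sum, Finset.sum_add_distrib] at hpair
  simp only [frobenius_norm_sq, Fintype.sum_option, Finset.sum_add_distrib,
    Matrix.submatrix_apply]
  linarith [sq_nonneg (B none none)]

variable {B}

lemma norm_integrateOut_sq_le (hB : ‖B‖ ≤ 1 / 4) :
    ‖integrateOut B‖ ^ 2 ≤ ‖B.submatrix some some‖ ^ 2
      + 9 / 32 * (couplingVec B ⬝ᵥ couplingVec B) := by
  set D := couplingVec B ⬝ᵥ couplingVec B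
  set F := ‖B.submatrix some some‖
  have hD0 : 0 ≤ D := dotProduct_self_star_nonneg (couplingVec B)
  have hDF : D ≤ 2 * (‖B‖ ^ 2 - F ^ 2) := couplingVec_dotProduct_self_le B
  have hF0 : 0 ≤ F := norm_nonneg _
  have hBsq : ‖B‖ ^ 2 ≤ 1 / 16 := by nlinarith [norm_nonneg B]
  have htriangle : ‖integrateOut B‖ ≤ F + D / 2 := by
    refine (norm_add_le _ _).trans_eq ?_
    rw [norm_smul, frobenius_norm_vecMulVec_self, Real.norm_of_nonneg (by norm_num)]
    ring
  have hF4 : F ≤ 1 / 4 := by nlinarith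
  calc ‖integrateOut B‖ ^ 2 ≤ (F + D / 2) ^ 2 := by gcongr
    _ ≤ F ^ 2 + 9 / 32 * D := by nlinarith

lemma norm_integrateOut_le (hB : ‖B‖ ≤ 1 / 4) : ‖integrateOut B‖ ≤ ‖B‖ := by
  refine le_of_sq_le_sq ?_ (norm_nonneg B)
  have hD : 0 ≤ couplingVec B ⬝ᵥ couplingVec B := dotProduct_self_star_nonneg _
  linarith [norm_integrateOut_sq_le hB, couplingVec_dotProduct_self_le B]

lemma trace_add_norm_integrateOut_le (hB : ‖B‖ ≤ 1 / 4) :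
    B none none + ((integrateOut B).trace + 3 * ‖integrateOut B‖ ^ 2)
      ≤ B.trace + 3 * ‖B‖ ^ 2 := by
  have htrace : B.trace = B none none + (B.submatrix some some).trace := by
    simp [Matrix.trace, Fintype.sum_option]
  have hD : 0 ≤ couplingVec B ⬝ᵥ couplingVec B := dotProduct_self_star_nonneg _
  linarith [trace_integrateOut B, norm_integrateOut_sq_le hB, couplingVec_dotProduct_self_le B]

end IntegrateOut

section Equiv

variable {κ : Type*} [Fintype κ] (e : κ ≃ ι) (B : Matrix ι ι ℝ)

lemma frobenius_norm_submatrix_equiv : ‖B.submatrix e e‖ = ‖B‖ := by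
  rw [← sq_eq_sq₀ (norm_nonneg _) (norm_nonneg _), frobenius_norm_sq, frobenius_norm_sq]
  exact Fintype.sum_equiv e _ _ fun i => e.sum_comp (B (e i) · ^ 2)

lemma rademacherChaos_submatrix_equiv (x : ι → Bool) :
    rademacherChaos (B.submatrix e e) (x ∘ e) = rademacherChaos B x :=
  Fintype.sum_equiv e _ _ fun i =>
    e.sum_comp fun j => B (e i) j * (boolSign (x (e i)) * boolSign (x j))

lemma expect_exp_rademacherChaos_submatrix_equiv [DecidableEq ι] [DecidableEq κ] :
    𝔼 y, Real.exp (rademacherChaos (B.submatrix e e) y) = 𝔼 x, Real.exp (rademacherChaos B x) :=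
  (Fintype.expect_equiv (e.symm.arrowCongr (Equiv.refl Bool)) _ _ fun x =>
    congrArg Real.exp (rademacherChaos_submatrix_equiv e B x).symm).symm

end Equiv

theorem expect_exp_rademacherChaos_le [DecidableEq ι] (B : Matrix ι ι ℝ) (hB : ‖B‖ ≤ 1 / 4) :
    𝔼 x, Real.exp (rademacherChaos B x) ≤ Real.exp (B.trace + 3 * ‖B‖ ^ 2) := by
  refine Fintype.induction_empty_option
    (P := fun α _ => ∀ (_ : DecidableEq α) (B : Matrix α α ℝ), ‖B‖ ≤ 1 / 4 →
      𝔼 x, Real.exp (rademacherChaos B x) ≤ Real.exp (B.trace + 3 * ‖B‖ ^ 2))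
    (fun α β _ e ih _ B hB => ?of_equiv) (fun _ B _ => ?empty)
    (fun α _ ih decEq B hB => ?option) ι _ B hB
  case of_equiv =>
    let _ := Fintype.ofEquiv β e.symm
    have htrace : (B.submatrix e e).trace = B.trace := e.sum_comp fun i => B i i
    have hnorm := frobenius_norm_submatrix_equiv e B
    rw [← htrace, ← hnorm, ← expect_exp_rademacherChaos_submatrix_equiv e B]
    exact ih _ (B.submatrix e e) (hnorm.trans_le hB)
  case empty => simp [rademacherChaos, Matrix.trace]
  case option =>
    obtain rfl := Subsingleton.elim decEq Option.instDecidableEq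
    calc 𝔼 x, Real.exp (rademacherChaos B x)
        ≤ Real.exp (B none none) * 𝔼 y, Real.exp (rademacherChaos (integrateOut B) y) :=
          expect_exp_rademacherChaos_option_le B
      _ ≤ Real.exp (B none none)
          * Real.exp ((integrateOut B).trace + 3 * ‖integrateOut B‖ ^ 2) := by
          gcongr
          exact ih _ _ ((norm_integrateOut_le hB).trans hB)
      _ ≤ Real.exp (B.trace + 3 * ‖B‖ ^ 2) := by
          rw [← Real.exp_add]
          exact Real.exp_le_exp.2 (trace_add_norm_integrateOut_le hB)

section LogSumExp

variable {X : Type*} [Fintype X] [Nonempty X]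

lemma exp_expect_le (f : X → ℝ) : Real.exp (𝔼 x, f x) ≤ 𝔼 x, Real.exp (f x) := by
  have h := convexOn_exp.map_sum_le (t := univ) (w := fun _ : X => (Fintype.card X : ℝ)⁻¹)
    (p := f) (fun _ _ => by positivity) (by simp) fun _ _ => Set.mem_univ _
  simpa only [Fintype.expect_eq_sum_div_card, div_eq_inv_mul, Finset.mul_sum, smul_eq_mul] using h

lemma expect_comp_le_log_card_add [Fintype Msg] (μ : X → Msg) (q : Msg → X → ℝ) (a : ℝ)
    (hq : ∀ m, 𝔼 x, Real.exp (q m x) ≤ Real.exp a) :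
    𝔼 x, q (μ x) x ≤ Real.log (Fintype.card Msg) + a := by
  have hcard : (0 : ℝ) < Fintype.card Msg :=
    mod_cast Fintype.card_pos_iff.2 ((inferInstance : Nonempty X).map μ)
  rw [← Real.exp_le_exp, Real.exp_add, Real.exp_log hcard]
  calc Real.exp (𝔼 x, q (μ x) x) ≤ 𝔼 x, Real.exp (q (μ x) x) := exp_expect_le _
    _ ≤ 𝔼 x, ∑ m, Real.exp (q m x) := Finset.expect_le_expect fun x _ =>
      Finset.single_le_sum (f := fun m => Real.exp (q m x))
        (fun m _ => (Real.exp_pos _).le) (mem_univ (μ x))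
    _ = ∑ m, 𝔼 x, Real.exp (q m x) := Finset.expect_sum_comm _ _ _
    _ ≤ ∑ _m : Msg, Real.exp a := Finset.sum_le_sum fun m _ => hq m
    _ = Fintype.card Msg * Real.exp a := by simp

end LogSumExp

section PairBias

variable [DecidableEq ι]

/-- The matrix of correlations `𝔼 x, 1[μ x = m] (-1) ^ (x i + x j)` of pairs of distinct bits
with the event that the message is `m`. The diagonal, which carries no information, is set to
zero. -/
noncomputable def pairBias (μ : (ι → Bool) → Msg) (m : Msg) : Matrix ι ι ℝ :=
  fun i j => if i = j then 0 else 𝔼 x, if μ x = m then boolSign (x i) * boolSign (x j) else 0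

lemma pairBias_self (μ : (ι → Bool) → Msg) (m : Msg) (i : ι) : pairBias μ m i i = 0 :=
  if_pos rfl

lemma expect_ite_rademacherChaos (μ : (ι → Bool) → Msg) (m : Msg) {B : Matrix ι ι ℝ}
    (hB : ∀ i, B i i = 0) :
    𝔼 x, (if μ x = m then rademacherChaos B x else 0) = ∑ i, ∑ j, B i j * pairBias μ m i j := by
  have hx (x : ι → Bool) : (if μ x = m then rademacherChaos B x else 0)
      = ∑ i, ∑ j, B i j * if μ x = m then boolSign (x i) * boolSign (x j) else 0 := by
    split_ifs <;> simp [rademacherChaos]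
  simp only [hx, Finset.expect_sum_comm, ← Finset.mul_expect]
  refine Finset.sum_congr rfl fun i _ => Finset.sum_congr rfl fun j _ => ?_
  by_cases hij : i = j
  · subst hij
    simp [hB]
  · rw [pairBias, if_neg hij]

theorem sum_norm_pairBias_le [Fintype Msg] (μ : (ι → Bool) → Msg) :
    ∑ m, ‖pairBias μ m‖ ≤ 4 * (Real.log (Fintype.card Msg) + 3 / 16) := by
  set B : Msg → Matrix ι ι ℝ := fun m => (4 * ‖pairBias μ m‖)⁻¹ • pairBias μ m with hBdef
  have hdiag (m : Msg) (i : ι) : B m i i = 0 := by simp [hBdef, pairBias_self]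
  have hnorm (m : Msg) : ‖B m‖ ≤ 1 / 4 := by
    rw [hBdef, norm_smul, Real.norm_of_nonneg (by positivity), mul_inv, mul_assoc]
    linarith [inv_mul_le_one (a := ‖pairBias μ m‖)]
  have hmoment (m : Msg) : 𝔼 x, Real.exp (rademacherChaos (B m) x) ≤ Real.exp (3 / 16) := by
    refine (expect_exp_rademacherChaos_le (B m) (hnorm m)).trans (Real.exp_le_exp.2 ?_)
    have htrace : (B m).trace = 0 := Finset.sum_eq_zero fun i _ => hdiag m i
    nlinarith [hnorm m, norm_nonneg (B m)]
  have hpairing (m : Msg) :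
      𝔼 x, (if μ x = m then rademacherChaos (B m) x else 0) = ‖pairBias μ m‖ / 4 := by
    have hentry (i j : ι) :
        B m i j * pairBias μ m i j = (4 * ‖pairBias μ m‖)⁻¹ * pairBias μ m i j ^ 2 := by
      simp only [hBdef, Matrix.smul_apply, smul_eq_mul]
      ring
    simp only [expect_ite_rademacherChaos μ m (hdiag m), hentry, ← Finset.mul_sum]
    rw [← frobenius_norm_sq]
    rcases eq_or_ne ‖pairBias μ m‖ 0 with h | h
    · simp [h]
    · field_simp
  have hsum : 𝔼 x, rademacherChaos (B (μ x)) x = (∑ m, ‖pairBias μ m‖) / 4 := by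
    simp only [Finset.sum_div, ← hpairing, ← Finset.expect_sum_comm, Finset.sum_ite_eq,
      mem_univ, if_true]
  linarith [expect_comp_le_log_card_add μ (fun m => rademacherChaos (B m)) (3 / 16) hmoment]

end PairBias

section Matching

variable {n : ℕ}

lemma Matching.nonempty_of_even (hn : Even n) : Nonempty (Matching n) := by
  obtain ⟨m, rfl⟩ := hn
  exact ⟨Fin.rev, Fin.rev_rev, fun i h => by have := congrArg Fin.val h; grind⟩

/-- The matching obtained from `M` by relabelling the vertices along `e`. -/
def Matching.conj (e : Equiv.Perm (Fin n)) (M : Matching n) : Matching n :=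
  ⟨fun i => e (M.1 (e.symm i)), fun i => by simp [M.2.1],
    fun i h => M.2.2 (e.symm i) ((Equiv.eq_symm_apply e).2 h)⟩

lemma Matching.conj_injective (e : Equiv.Perm (Fin n)) : Function.Injective (Matching.conj e) := by
  intro M M' h
  refine Subtype.ext (funext fun a => ?_)
  simpa [Matching.conj] using congrFun (congrArg Subtype.val h) (e a)

lemma Matching.card_apply_eq_le {i j k : Fin n} (hj : j ≠ i) (hk : k ≠ i) :
    #{M : Matching n | M.1 i = j} ≤ #{M : Matching n | M.1 i = k} := by
  refine Finset.card_le_card_of_injOn (Matching.conj (Equiv.swap j k)) (fun M hM => ?_)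
    (Matching.conj_injective _).injOn
  have hMi : M.1 i = j := by simpa using hM
  refine Finset.mem_coe.2 (Finset.mem_filter.2 ⟨mem_univ _, ?_⟩)
  simp [Matching.conj, Equiv.swap_apply_of_ne_of_ne hj.symm hk.symm, hMi]

lemma Matching.card_eq_mul_card_apply_eq {i j : Fin n} (hj : j ≠ i) :
    Fintype.card (Matching n) = #(univ.erase i) * #{M : Matching n | M.1 i = j} := by
  rw [← Finset.card_univ, Finset.card_eq_sum_card_fiberwise (f := fun M : Matching n => M.1 i)
    (t := univ.erase i) fun M _ => by simpa using M.2.2 i]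
  refine Finset.sum_const_nat fun k hk => ?_
  have hki := Finset.ne_of_mem_erase hk
  exact (Matching.card_apply_eq_le hki hj).antisymm (Matching.card_apply_eq_le hj hki)

lemma Matching.expect_apply [Nonempty (Matching n)] (i : Fin n) (g : Fin n → ℝ) :
    𝔼 M : Matching n, g (M.1 i) = 𝔼 j ∈ univ.erase i, g j := by
  have hmaps (M : Matching n) : M.1 i ∈ univ.erase i := by simpa using M.2.2 i
  rw [Fintype.expect_eq_sum_div_card, Finset.expect_eq_sum_div_card,
    ← Finset.sum_fiberwise_of_maps_to (fun M _ => hmaps M), Finset.sum_div, Finset.sum_div]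
  refine Finset.sum_congr rfl fun j hj => ?_
  have hcard := Matching.card_eq_mul_card_apply_eq (Finset.ne_of_mem_erase hj)
  have hpos : 0 < #(univ.erase i) * #{M : Matching n | M.1 i = j} := hcard ▸ Fintype.card_pos
  have hfiber : ∑ M : Matching n with M.1 i = j, g (M.1 i)
      = #{M : Matching n | M.1 i = j} * g j := by
    rw [Finset.sum_congr rfl fun M hM => by rw [(Finset.mem_filter.1 hM).2], Finset.sum_const,
      nsmul_eq_mul]
  rw [hfiber, hcard, Nat.cast_mul, mul_comm, mul_div_mul_right]
  exact_mod_cast (Nat.pos_of_mul_pos_left hpos).ne'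

lemma Matching.expect_sq_entry_le [Nonempty (Matching n)] (T : Matrix (Fin n) (Fin n) ℝ)
    (f : Matching n → Fin n) :
    𝔼 M : Matching n, T (f M) (M.1 (f M)) ^ 2 ≤ ‖T‖ ^ 2 / (n - 1) := by
  calc 𝔼 M : Matching n, T (f M) (M.1 (f M)) ^ 2
      ≤ 𝔼 M : Matching n, ∑ i, T i (M.1 i) ^ 2 := Finset.expect_le_expect fun M _ =>
        Finset.single_le_sum (f := fun i => T i (M.1 i) ^ 2) (fun i _ => sq_nonneg _)
          (mem_univ (f M))
    _ = ∑ i, (∑ j ∈ univ.erase i, T i j ^ 2) / (n - 1) := by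
      rw [Finset.expect_sum_comm]
      refine Finset.sum_congr rfl fun i _ => ?_
      rw [Matching.expect_apply i (T i · ^ 2), Finset.expect_eq_sum_div_card,
        Finset.card_erase_of_mem (mem_univ i), Finset.card_fin, Nat.cast_pred i.pos]
    _ ≤ ∑ i, (∑ j, T i j ^ 2) / (n - 1) := by
      refine Finset.sum_le_sum fun i _ => ?_
      have hn : (0 : ℝ) ≤ n - 1 := sub_nonneg.2 (mod_cast i.pos)
      gcongr
      exact Finset.erase_subset _ _
    _ = ‖T‖ ^ 2 / (n - 1) := by rw [← Finset.sum_div, frobenius_norm_sq]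

lemma Matching.expect_abs_entry_le [Nonempty (Matching n)] (T : Matrix (Fin n) (Fin n) ℝ)
    (f : Matching n → Fin n) :
    𝔼 M : Matching n, |T (f M) (M.1 (f M))| ≤ ‖T‖ / √(n - 1) := by
  have hjensen := Finset.expect_mul_sq_le_sq_mul_sq univ
    (fun M : Matching n => |T (f M) (M.1 (f M))|) 1
  simp only [Pi.one_apply, mul_one, one_pow, sq_abs, Fintype.expect_one] at hjensen
  calc 𝔼 M : Matching n, |T (f M) (M.1 (f M))| ≤ √(‖T‖ ^ 2 / (n - 1)) :=
        Real.le_sqrt_of_sq_le (hjensen.trans (Matching.expect_sq_entry_le T f))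
    _ = ‖T‖ / √(n - 1) := by rw [Real.sqrt_div (sq_nonneg _), Real.sqrt_sq (norm_nonneg _)]

end Matching

section Protocol

variable {n : ℕ} (μ : (Fin n → Bool) → Msg) (out : Msg → Matching n → Fin n × Bool)

/-- The bias of the protocol `(μ, out)`: the probability of winning minus the probability of
losing. -/
noncomputable def protocolBias : ℝ :=
  𝔼 x, 𝔼 M : Matching n, boolSign (out (μ x) M).2
    * (boolSign (x (out (μ x) M).1) * boolSign (x (M.1 (out (μ x) M).1)))

lemma winProbability_eq_half_add_protocolBias [Nonempty (Matching n)] :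
    (∑ x : Fin n → Bool, ∑ M : Matching n,
        if (out (μ x) M).2 = xor (x (out (μ x) M).1) (x (M.1 (out (μ x) M).1))
        then (1 : ℝ) else 0) / ((2 : ℝ) ^ n * Fintype.card (Matching n))
      = 1 / 2 + protocolBias μ out / 2 := by
  have hcube : (2 : ℝ) ^ n = Fintype.card (Fin n → Bool) := by simp
  rw [hcube, mul_comm, ← div_div, Finset.sum_div]
  simp only [← Fintype.expect_eq_sum_div_card, ite_eq_xor, Finset.expect_add_distrib,
    Fintype.expect_const, ← Finset.expect_div, protocolBias]

lemma protocolBias_eq_sum [Fintype Msg] :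
    protocolBias μ out = ∑ m, 𝔼 M : Matching n,
      boolSign (out m M).2 * pairBias μ m (out m M).1 (M.1 (out m M).1) := by
  simp only [protocolBias, Finset.expect_comm univ (univ : Finset (Matching n)),
    ← Finset.expect_sum_comm]
  refine Finset.expect_congr rfl fun M _ => ?_
  have hbias (m : Msg) : pairBias μ m (out m M).1 (M.1 (out m M).1) = 𝔼 x, if μ x = m then
      boolSign (x (out m M).1) * boolSign (x (M.1 (out m M).1)) else 0 := by
    rw [pairBias, if_neg (M.2.2 _).symm]
  simp only [hbias, Finset.mul_expect, ← Finset.expect_sum_comm, mul_ite, mul_zero,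
    Finset.sum_ite_eq, mem_univ, if_true]

lemma protocolBias_le [Fintype Msg] [Nonempty (Matching n)] :
    protocolBias μ out ≤ (∑ m, ‖pairBias μ m‖) / √(n - 1) := by
  rw [protocolBias_eq_sum, Finset.sum_div]
  refine Finset.sum_le_sum fun m _ => ?_
  refine le_trans ?_ (Matching.expect_abs_entry_le (pairBias μ m) fun M => (out m M).1)
  refine Finset.expect_le_expect fun M _ => (le_abs_self _).trans_eq ?_
  rw [abs_mul, abs_boolSign, one_mul]

end Protocol

lemma log_add_le_logb_two {k : ℕ} (hk : 2 ≤ k) : Real.log k + 3 / 16 ≤ Real.logb 2 k := by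
  have hlog : Real.log 2 ≤ Real.log k := Real.log_le_log (by norm_num) (mod_cast hk)
  have hlog2 := Real.log_two_lt_d9
  have hlog2_pos := Real.log_pos one_lt_two
  rw [Real.logb, le_div_iff₀ hlog2_pos]
  nlinarith

lemma two_div_sqrt_sub_one_le {r : ℝ} (hr : 2 ≤ r) : 2 / √(r - 1) ≤ 3 / √r := by
  have hr1 : 0 < r - 1 := by linarith
  rw [div_le_div_iff₀ (Real.sqrt_pos.2 hr1) (Real.sqrt_pos.2 (by linarith))]
  refine le_of_sq_le_sq ?_ (by positivity)
  rw [mul_pow, mul_pow, Real.sq_sqrt hr1.le, Real.sq_sqrt (by linarith)]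
  linarith

theorem hidden_matching_classical_upper_bound_general [Fintype Msg] [Nontrivial Msg] {n : ℕ}
    (hn : Even n) (μ : (Fin n → Bool) → Msg) (out : Msg → Matching n → Fin n × Bool) :
    (∑ x : Fin n → Bool, ∑ M : Matching n,
        if (out (μ x) M).2 = xor (x (out (μ x) M).1) (x (M.1 (out (μ x) M).1))
        then (1 : ℝ) else 0) / ((2 : ℝ) ^ n * Fintype.card (Matching n))
      ≤ 1 / 2 + 3 * Real.logb 2 (Fintype.card Msg) / √n := by
  have hM := Matching.nonempty_of_even hn
  have hn2 : 2 ≤ n := by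
    have hpos : 0 < n := (out (μ fun _ => false) hM.some).1.pos
    obtain ⟨m, rfl⟩ := hn
    omega
  have hmsg : 2 ≤ Fintype.card Msg := Fintype.one_lt_card
  have hlogb : 0 ≤ Real.logb 2 (Fintype.card Msg) :=
    Real.logb_nonneg one_lt_two (mod_cast one_le_two.trans hmsg)
  have hbias : protocolBias μ out ≤ 4 * Real.logb 2 (Fintype.card Msg) / √(n - 1) := by
    refine (protocolBias_le μ out).trans ?_
    gcongr
    linarith [sum_norm_pairBias_le μ, log_add_le_logb_two hmsg]
  have hsqrt := mul_le_mul_of_nonneg_left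
    (two_div_sqrt_sub_one_le (r := n) (mod_cast hn2)) hlogb
  calc _ = 1 / 2 + protocolBias μ out / 2 := winProbability_eq_half_add_protocolBias μ out
    _ ≤ 1 / 2 + Real.logb 2 (Fintype.card Msg) * (2 / √(n - 1)) := by
      linarith [show 4 * Real.logb 2 (Fintype.card Msg) / √(n - 1)
        = 2 * (Real.logb 2 (Fintype.card Msg) * (2 / √(n - 1))) by ring]
    _ ≤ 1 / 2 + 3 * Real.logb 2 (Fintype.card Msg) / √n := by
      linarith [show 3 * Real.logb 2 (Fintype.card Msg) / √n
        = Real.logb 2 (Fintype.card Msg) * (3 / √n) by ring]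

/-- For every power of two `n = 2^k ≥ 2` and every deterministic one-way
protocol for Hidden Matching with `c` bits of communication (message function `μ`,
Bob's output `out` giving, for each message and matching, an index `i` (matched to
`j = M i`) and a bit `v`), the winning probability over uniform `x` and uniform
perfect matching `M` is at most `1/2 + C·c/√n` for a universal constant `C > 0`. -/
theorem hidden_matching_classical_upper_bound :
    ∃ C : ℝ, 0 < C ∧
      ∀ k : ℕ, 1 ≤ k →
      ∀ c : ℕ, 1 ≤ c →
      ∀ (μ : (Fin (2 ^ k) → Bool) → (Fin c → Bool))
        (out : (Fin c → Bool) → Matching (2 ^ k) → Fin (2 ^ k) × Bool),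
        (∑ x : Fin (2 ^ k) → Bool, ∑ M : Matching (2 ^ k),
            if (out (μ x) M).2
                = xor (x (out (μ x) M).1) (x (M.1 (out (μ x) M).1))
            then (1 : ℝ) else 0)
          / ((2 : ℝ) ^ (2 ^ k) * (Fintype.card (Matching (2 ^ k))))
        ≤ 1 / 2 + C * c / Real.sqrt (2 ^ k) := by
  refine ⟨3, by norm_num, fun k hk c hc μ out => ?_⟩
  have : NeZero c := ⟨by omega⟩
  have hn : Even (2 ^ k) := (Nat.even_pow' (by omega)).2 even_two
  simpa [Real.logb_pow] using hidden_matching_classical_upper_bound_general hn μ out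
end

section
/- There exists a universal constant C > 0 such that for every positive integer n and every nonempty subset X ⊆ {0,1}^n with density p = |X|/2^n, defining β_{ij} = (1/|X|) Σ_{x ∈ X} (−1)^{x_i ⊕ x_j} for each ordered pair (i,j) with i ≠ j, one has Σ_{i ≠ j} β_{ij}² ≤ C·(1 + log₂(1/p))². -/
open scoped Classical
open Finset

/-!
Bonami's inequality bounds the `2k`-th moment of a function on the cube by its Fourier coefficients,
with weight `(2k - 1) ^ |S|` at `S`. It tensorizes: the one-coordinate case compares the binomial
coefficients `(2k choose 2j)` and `(k choose j)`, and Minkowski's inequality in `Lᵏ` combines one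
coordinate with the others. Now test a function whose Fourier coefficients are multiples of the
biases `β S` of `X` against the uniform measure on `X`: passing to the uniform measure on the cube
costs a factor `1 / p` in the `2k`-th moment, which gives the KKL inequality
`∑ S, (2k - 1) ^ (-|S|) * β S ^ 2 ≤ p ^ (-1 / k)`. For `k` about `1 + log₂ (1 / p)` the right-hand
side is at most `2`, so level `d` has weight at most `2 * (2k - 1) ^ d`.
-/

namespace BooleanCube

open scoped BigOperators

lemma choose_two_mul_two_mul_le (k j : ℕ) :
    (2 * k).choose (2 * j) ≤ k.choose j * (2 * k - 1) ^ j := by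
  induction j with
  | zero => simp
  | succ j ih =>
    have hk : k.choose (j + 1) * (j + 1) = k.choose j * (k - j) := Nat.choose_succ_right_eq k j
    have to_odd : (2 * k).choose (2 * j + 1) * (2 * j + 1)
        = (2 * k).choose (2 * j) * (2 * (k - j)) := by
      rw [Nat.choose_succ_right_eq, ← Nat.mul_sub]
    have to_even : (2 * k).choose (2 * (j + 1)) * (2 * j + 2)
        = (2 * k).choose (2 * j + 1) * (2 * k - (2 * j + 1)) :=
      Nat.choose_succ_right_eq (2 * k) (2 * j + 1)
    refine Nat.le_of_mul_le_mul_right (c := (2 * j + 2) * (2 * j + 1)) ?_ (by positivity)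
    calc (2 * k).choose (2 * (j + 1)) * ((2 * j + 2) * (2 * j + 1))
        = (2 * k).choose (2 * j) * (2 * (k - j)) * (2 * k - (2 * j + 1)) := by
          rw [← to_odd, ← mul_assoc, to_even]; ring
      _ ≤ k.choose j * (2 * k - 1) ^ j * (2 * (k - j)) * ((2 * k - 1) * (2 * j + 1)) := by
          gcongr
          calc 2 * k - (2 * j + 1) ≤ 2 * k - 1 := by omega
            _ ≤ (2 * k - 1) * (2 * j + 1) := Nat.le_mul_of_pos_right _ (by omega)
      _ = k.choose j * (k - j) * ((2 * k - 1) ^ (j + 1) * (2 * (2 * j + 1))) := by ring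
      _ = k.choose (j + 1) * (2 * k - 1) ^ (j + 1) * ((2 * j + 2) * (2 * j + 1)) := by
          rw [← hk]
          ring

lemma sum_range_two_mul_add_one_of_odd_eq_zero {M : Type*} [AddCommMonoid M] {f : ℕ → M}
    (hf : ∀ j, f (2 * j + 1) = 0) (k : ℕ) :
    ∑ m ∈ range (2 * k + 1), f m = ∑ j ∈ range (k + 1), f (2 * j) := by
  induction k with
  | zero => simp
  | succ k ih =>
    rw [show 2 * (k + 1) + 1 = 2 * k + 1 + 1 + 1 by ring, sum_range_succ, sum_range_succ, ih, hf,
      add_zero, sum_range_succ _ (k + 1)]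
    rfl

lemma add_pow_add_sub_pow_two_mul {R : Type*} [CommRing R] (a b : R) (k : ℕ) :
    (a + b) ^ (2 * k) + (a - b) ^ (2 * k)
      = 2 * ∑ j ∈ range (k + 1), (b ^ 2) ^ j * (a ^ 2) ^ (k - j) * (2 * k).choose (2 * j) := by
  rw [sub_eq_neg_add, add_comm a b, add_pow, add_pow, ← sum_add_distrib,
    sum_range_two_mul_add_one_of_odd_eq_zero, mul_sum]
  · refine sum_congr rfl fun j _ ↦ ?_
    rw [(even_two_mul j).neg_pow, ← Nat.mul_sub, pow_mul, pow_mul]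
    ring
  · intro j
    rw [(odd_two_mul_add_one j).neg_pow]
    ring

lemma add_pow_add_sub_pow_two_mul_le {R : Type*} [CommRing R] [LinearOrder R]
    [IsStrictOrderedRing R] (a b : R) (k : ℕ) :
    (a + b) ^ (2 * k) + (a - b) ^ (2 * k) ≤ 2 * (a ^ 2 + (2 * k - 1) * b ^ 2) ^ k := by
  obtain rfl | hk := Nat.eq_zero_or_pos k
  · norm_num
  rw [add_pow_add_sub_pow_two_mul, add_comm (a ^ 2), add_pow]
  refine mul_le_mul_of_nonneg_left (sum_le_sum fun j _ ↦ ?_) zero_le_two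
  have hchoose : ((2 * k).choose (2 * j) : R) ≤ k.choose j * (2 * k - 1) ^ j := by
    have h := choose_two_mul_two_mul_le k j
    rw [← Nat.cast_le (α := R)] at h
    push_cast [Nat.cast_sub (show 1 ≤ 2 * k by omega)] at h
    exact h
  calc (b ^ 2) ^ j * (a ^ 2) ^ (k - j) * (2 * k).choose (2 * j)
      ≤ (b ^ 2) ^ j * (a ^ 2) ^ (k - j) * (k.choose j * (2 * k - 1) ^ j) := by gcongr
    _ = ((2 * k - 1) * b ^ 2) ^ j * (a ^ 2) ^ (k - j) * k.choose j := by rw [mul_pow]; ring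

lemma expect_add_pow_le {α : Type*} {s : Finset α} {f g : α → ℝ} {A B : ℝ} {k : ℕ}
    (hf : ∀ x ∈ s, 0 ≤ f x) (hg : ∀ x ∈ s, 0 ≤ g x) (hA : 0 ≤ A) (hB : 0 ≤ B)
    (hfA : 𝔼 x ∈ s, f x ^ k ≤ A ^ k) (hgB : 𝔼 x ∈ s, g x ^ k ≤ B ^ k) :
    𝔼 x ∈ s, (f x + g x) ^ k ≤ (A + B) ^ k := by
  obtain rfl | hs := s.eq_empty_or_nonempty
  · simp only [expect_empty]; positivity
  obtain rfl | hk := Nat.eq_zero_or_pos k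
  · simpa using hfA
  have hs' : (0 : ℝ) < #s := mod_cast hs.card_pos
  have root_le {h : α → ℝ} {H : ℝ} (h0 : ∀ x ∈ s, 0 ≤ h x) (hH : 0 ≤ H)
      (hle : 𝔼 x ∈ s, h x ^ k ≤ H ^ k) :
      (∑ x ∈ s, h x ^ k) ^ (k⁻¹ : ℝ) ≤ (#s : ℝ) ^ (k⁻¹ : ℝ) * H := by
    rw [← card_mul_expect]
    calc (#s * 𝔼 x ∈ s, h x ^ k) ^ (k⁻¹ : ℝ) ≤ (#s * H ^ k) ^ (k⁻¹ : ℝ) := by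
          gcongr
          exact mul_nonneg hs'.le (expect_nonneg fun x hx ↦ pow_nonneg (h0 x hx) k)
      _ = (#s : ℝ) ^ (k⁻¹ : ℝ) * H := by
          rw [Real.mul_rpow hs'.le (by positivity), Real.pow_rpow_inv_natCast hH hk.ne']
  have minkowski := Real.Lp_add_le_of_nonneg (p := k) s (mod_cast hk) hf hg
  simp only [Real.rpow_natCast, one_div] at minkowski
  have hsum : 0 ≤ ∑ x ∈ s, (f x + g x) ^ k :=
    sum_nonneg fun x hx ↦ pow_nonneg (add_nonneg (hf x hx) (hg x hx)) k
  rw [expect_eq_sum_div_card, div_le_iff₀' hs']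
  calc ∑ x ∈ s, (f x + g x) ^ k = ((∑ x ∈ s, (f x + g x) ^ k) ^ (k⁻¹ : ℝ)) ^ k :=
        (Real.rpow_inv_natCast_pow hsum hk.ne').symm
    _ ≤ ((#s : ℝ) ^ (k⁻¹ : ℝ) * (A + B)) ^ k := by
        gcongr
        linarith [root_le hf hA hfA, root_le hg hB hgB]
    _ = #s * (A + B) ^ k := by rw [mul_pow, Real.rpow_inv_natCast_pow hs'.le hk.ne']

lemma expect_pow_le_card_div_card_mul_expect_pow {α : Type*} [Fintype α] (X : Finset α) (f : α → ℝ)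
    {m : ℕ} (hm : Even m) (hX : X.Nonempty) :
    (𝔼 x ∈ X, f x) ^ m ≤ Fintype.card α / #X * 𝔼 x, f x ^ m := by
  have hX' : (0 : ℝ) < #X := mod_cast hX.card_pos
  have : Nonempty α := ⟨hX.choose⟩
  calc (𝔼 x ∈ X, f x) ^ m = (∑ x ∈ X, (#X : ℝ)⁻¹ * f x) ^ m := by
        rw [expect_eq_sum_div_card, ← mul_sum, div_eq_inv_mul]
    _ ≤ ∑ x ∈ X, (#X : ℝ)⁻¹ * f x ^ m :=
        Real.pow_arith_mean_le_arith_mean_pow_of_even X _ f (fun _ _ ↦ by positivity)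
          (by simp [hX'.ne']) hm
    _ ≤ ∑ x, (#X : ℝ)⁻¹ * f x ^ m :=
        sum_le_univ_sum_of_nonneg fun x ↦ mul_nonneg (by positivity) (hm.pow_nonneg _)
    _ = Fintype.card α / #X * 𝔼 x, f x ^ m := by
        rw [← mul_sum, Fintype.expect_eq_sum_div_card]
        field_simp

lemma sum_offDiag_pair {α M : Type*} [DecidableEq α] [AddCommMonoid M] (s : Finset α)
    (f : Finset α → M) :
    ∑ p ∈ s.offDiag, f {p.1, p.2} = 2 • ∑ S ∈ s.powersetCard 2, f S := by
  have maps_to : ∀ p ∈ s.offDiag, ({p.1, p.2} : Finset α) ∈ s.powersetCard 2 := by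
    intro p hp
    obtain ⟨h₁, h₂, hne⟩ := mem_offDiag.mp hp
    exact mem_powersetCard.mpr ⟨by simp [insert_subset_iff, h₁, h₂], card_pair hne⟩
  rw [← sum_fiberwise_of_maps_to maps_to, smul_sum]
  refine sum_congr rfl fun S hS ↦ ?_
  obtain ⟨hSs, hcard⟩ := mem_powersetCard.mp hS
  obtain ⟨a, b, hab, rfl⟩ := card_eq_two.mp hcard
  have fiber : {p ∈ s.offDiag | ({p.1, p.2} : Finset α) = {a, b}} = {(a, b), (b, a)} := by
    ext ⟨u, v⟩
    simp only [insert_subset_iff, singleton_subset_iff] at hSs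
    simp only [mem_filter, mem_offDiag, mem_insert, mem_singleton, Prod.mk.injEq]
    grind
  rw [sum_congr rfl fun p hp ↦ by rw [(mem_filter.mp hp).2], sum_const, fiber,
    card_pair (by simp [hab])]

lemma sum_powersetCard_le_pow_mul_sum {α : Type*} [Fintype α] {f : Finset α → ℝ} {ρ : ℝ}
    (hρ : 0 < ρ) (hf : ∀ S, 0 ≤ f S) (d : ℕ) :
    ∑ S ∈ powersetCard d univ, f S ≤ ρ ^ d * ∑ S, (ρ ^ #S)⁻¹ * f S := by
  calc ∑ S ∈ powersetCard d univ, f S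
      = ρ ^ d * ∑ S ∈ powersetCard d univ, (ρ ^ #S)⁻¹ * f S := by
        rw [mul_sum]
        refine sum_congr rfl fun S hS ↦ ?_
        rw [(mem_powersetCard.mp hS).2, mul_inv_cancel_left₀ (by positivity)]
    _ ≤ ρ ^ d * ∑ S, (ρ ^ #S)⁻¹ * f S := by
        refine mul_le_mul_of_nonneg_left ?_ (by positivity)
        exact sum_le_univ_sum_of_nonneg fun S ↦ mul_nonneg (by positivity) (hf S)

variable {ι : Type*}

/-- The Walsh function `x ↦ ∏ i ∈ S, (-1) ^ x i`, a character of the cube `{0,1}^ι`, in which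
functions on the cube are expanded; the coordinates are encoded as booleans. -/
def walsh (S : Finset ι) (x : ι → Bool) : ℝ :=
  ∏ i ∈ S, if x i then -1 else 1

/-- The bias on `X` of the parity of the coordinates in `S`, i.e. the Fourier coefficient at `S` of
the indicator function of `X` divided by the density of `X`. -/
noncomputable def parityBias (X : Finset (ι → Bool)) (S : Finset ι) : ℝ :=
  𝔼 x ∈ X, walsh S x

lemma walsh_insert [DecidableEq ι] {i : ι} {S : Finset ι} (hi : i ∉ S) (x : ι → Bool) :
    walsh (insert i S) x = walsh {i} x * walsh S x := by
  simp only [walsh, prod_insert hi, prod_singleton]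

lemma walsh_singleton_sq (i : ι) (x : ι → Bool) : walsh {i} x ^ 2 = 1 := by
  cases h : x i <;> simp [walsh, h]

lemma walsh_pair {i j : ι} [DecidableEq ι] (hij : i ≠ j) (x : ι → Bool) :
    walsh {i, j} x = if xor (x i) (x j) then -1 else 1 := by
  cases hi : x i <;> cases hj : x j <;> simp [walsh, prod_pair hij, hi, hj]

section FlipCoord

variable [DecidableEq ι]

/-- The permutation of the cube that negates the coordinate `i`, for averaging over this
coordinate. -/
def flipCoord (i : ι) : Equiv.Perm (ι → Bool) :=
  Function.Involutive.toPerm (fun x ↦ Function.update x i (!x i)) fun x ↦ by simp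

lemma flipCoord_apply (i : ι) (x : ι → Bool) :
    flipCoord i x = Function.update x i (!x i) := rfl

lemma walsh_flipCoord_of_notMem {i : ι} {S : Finset ι} (hi : i ∉ S) (x : ι → Bool) :
    walsh S (flipCoord i x) = walsh S x :=
  prod_congr rfl fun j hj ↦ by
    simp [flipCoord_apply, Function.update_of_ne (ne_of_mem_of_not_mem hj hi)]

lemma walsh_singleton_flipCoord (i : ι) (x : ι → Bool) :
    walsh {i} (flipCoord i x) = -walsh {i} x := by
  cases h : x i <;> simp [walsh, flipCoord_apply, h]

lemma expect_add_walsh_singleton_mul_pow_le [Fintype ι] {i : ι} {g h : (ι → Bool) → ℝ}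
    (hg : ∀ x, g (flipCoord i x) = g x) (hh : ∀ x, h (flipCoord i x) = h x) (k : ℕ) :
    𝔼 x, (g x + walsh {i} x * h x) ^ (2 * k)
      ≤ 𝔼 x, (g x ^ 2 + (2 * k - 1) * h x ^ 2) ^ k := by
  have flipped : 𝔼 x, (g x + walsh {i} x * h x) ^ (2 * k)
      = 𝔼 x, (g x - walsh {i} x * h x) ^ (2 * k) :=
    (Fintype.expect_equiv (flipCoord i) _ _ fun x ↦ by
      rw [hg, hh, walsh_singleton_flipCoord, neg_mul, sub_eq_add_neg, neg_neg])
  have averaged : 𝔼 x, ((g x + walsh {i} x * h x) ^ (2 * k) + (g x - walsh {i} x * h x) ^ (2 * k))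
      ≤ 𝔼 x, 2 * (g x ^ 2 + (2 * k - 1) * h x ^ 2) ^ k :=
    expect_le_expect fun x _ ↦ by
      simpa only [mul_pow, walsh_singleton_sq, one_mul] using
        add_pow_add_sub_pow_two_mul_le (g x) (walsh {i} x * h x) k
  rw [expect_add_distrib, ← mul_expect, ← flipped] at averaged
  linarith

lemma sum_powerset_insert_mul_walsh {i : ι} {U : Finset ι} (hi : i ∉ U) (c : Finset ι → ℝ)
    (x : ι → Bool) :
    ∑ S ∈ (insert i U).powerset, c S * walsh S x
      = ∑ S ∈ U.powerset, c S * walsh S x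
        + walsh {i} x * ∑ S ∈ U.powerset, c (insert i S) * walsh S x := by
  rw [sum_powerset_insert hi, mul_sum]
  congr 1
  refine sum_congr rfl fun S hS ↦ ?_
  rw [walsh_insert (notMem_of_mem_powerset_of_notMem hS hi)]
  ring

lemma sum_powerset_insert_pow_card_mul {R : Type*} [CommSemiring R] {i : ι} {U : Finset ι}
    (hi : i ∉ U) (ρ : R) (f : Finset ι → R) :
    ∑ S ∈ (insert i U).powerset, ρ ^ #S * f S
      = ∑ S ∈ U.powerset, ρ ^ #S * f S + ρ * ∑ S ∈ U.powerset, ρ ^ #S * f (insert i S) := by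
  rw [sum_powerset_insert hi, mul_sum]
  congr 1
  refine sum_congr rfl fun S hS ↦ ?_
  rw [card_insert_of_notMem (notMem_of_mem_powerset_of_notMem hS hi)]
  ring

lemma sum_powerset_mul_walsh_flipCoord {i : ι} {U : Finset ι} (hi : i ∉ U) (c : Finset ι → ℝ)
    (x : ι → Bool) :
    ∑ S ∈ U.powerset, c S * walsh S (flipCoord i x) = ∑ S ∈ U.powerset, c S * walsh S x :=
  sum_congr rfl fun S hS ↦ by
    rw [walsh_flipCoord_of_notMem (notMem_of_mem_powerset_of_notMem hS hi)]

-- With `c S = (2k - 1) ^ (-|S| / 2) * a S` this says that the noise operator of parameter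
-- `(2k - 1) ^ (-1 / 2)` is a contraction from `L²` to `L²ᵏ`.
theorem bonami_inequality [Fintype ι] (U : Finset ι) (c : Finset ι → ℝ) (k : ℕ) :
    𝔼 x : ι → Bool, (∑ S ∈ U.powerset, c S * walsh S x) ^ (2 * k)
      ≤ (∑ S ∈ U.powerset, (2 * k - 1 : ℝ) ^ #S * c S ^ 2) ^ k := by
  obtain rfl | hk := Nat.eq_zero_or_pos k
  · simp
  have hρ : (0 : ℝ) ≤ 2 * k - 1 := by
    have : (1 : ℝ) ≤ k := mod_cast hk
    linarith
  induction U using Finset.induction_on generalizing c with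
  | empty => simp [walsh, pow_mul]
  | insert i U hi ih =>
    simp only [sum_powerset_insert_mul_walsh hi,
      sum_powerset_insert_pow_card_mul hi _ fun S ↦ c S ^ 2]
    set g : (ι → Bool) → ℝ := fun x ↦ ∑ S ∈ U.powerset, c S * walsh S x
    set h : (ι → Bool) → ℝ := fun x ↦ ∑ S ∈ U.powerset, c (insert i S) * walsh S x
    set A := ∑ S ∈ U.powerset, (2 * k - 1 : ℝ) ^ #S * c S ^ 2
    set B := ∑ S ∈ U.powerset, (2 * k - 1 : ℝ) ^ #S * c (insert i S) ^ 2
    have hg : 𝔼 x, (g x ^ 2) ^ k ≤ A ^ k := by simpa only [pow_mul] using ih c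
    have hh : 𝔼 x, ((2 * k - 1) * h x ^ 2) ^ k ≤ ((2 * k - 1) * B) ^ k := by
      simp only [mul_pow _ (_ ^ 2), mul_pow _ B, ← mul_expect]
      gcongr
      simpa only [pow_mul] using ih fun S ↦ c (insert i S)
    calc 𝔼 x, (g x + walsh {i} x * h x) ^ (2 * k)
        ≤ 𝔼 x, (g x ^ 2 + (2 * k - 1) * h x ^ 2) ^ k :=
          expect_add_walsh_singleton_mul_pow_le (sum_powerset_mul_walsh_flipCoord hi c)
            (sum_powerset_mul_walsh_flipCoord hi fun S ↦ c (insert i S)) k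
      _ ≤ (A + (2 * k - 1) * B) ^ k :=
          expect_add_pow_le (fun _ _ ↦ by positivity) (fun _ _ ↦ by positivity)
            (by positivity) (by positivity) hg hh

end FlipCoord

section Fourier

variable [Fintype ι] {X : Finset (ι → Bool)}

theorem kkl_inequality (hX : X.Nonempty) (k : ℕ) :
    (∑ S, ((2 * k - 1 : ℝ) ^ #S)⁻¹ * parityBias X S ^ 2) ^ k ≤ 2 ^ Fintype.card ι / #X := by
  set ρ : ℝ := 2 * k - 1 with hρ
  have hρ0 : ρ ≠ 0 := by
    rw [hρ, sub_ne_zero]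
    norm_cast
    omega
  set W := ∑ S, (ρ ^ #S)⁻¹ * parityBias X S ^ 2
  set F : (ι → Bool) → ℝ := fun x ↦ ∑ S, (ρ ^ #S)⁻¹ * parityBias X S * walsh S x
  have mean_eq : 𝔼 x ∈ X, F x = W := by
    rw [expect_sum_comm]
    refine sum_congr rfl fun S _ ↦ ?_
    rw [← mul_expect, ← parityBias]
    ring
  have moment_le : 𝔼 x, F x ^ (2 * k) ≤ W ^ k := by
    have h := bonami_inequality univ (fun S ↦ (ρ ^ #S)⁻¹ * parityBias X S) k
    rw [powerset_univ, ← hρ] at h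
    refine h.trans_eq ?_
    congr 1
    refine sum_congr rfl fun S _ ↦ ?_
    have := pow_ne_zero #S hρ0
    field_simp
  have sq_le : W ^ k * W ^ k ≤ 2 ^ Fintype.card ι / #X * W ^ k := by
    calc W ^ k * W ^ k = (𝔼 x ∈ X, F x) ^ (2 * k) := by rw [mean_eq]; ring
      _ ≤ Fintype.card (ι → Bool) / #X * 𝔼 x, F x ^ (2 * k) :=
          expect_pow_le_card_div_card_mul_expect_pow X F (even_two_mul k) hX
      _ ≤ 2 ^ Fintype.card ι / #X * W ^ k := by
          simp only [Fintype.card_fun, Fintype.card_bool, Nat.cast_pow, Nat.cast_ofNat]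
          gcongr
  obtain hW | hW := le_or_gt (W ^ k) 0
  · exact hW.trans (by positivity)
  · exact le_of_mul_le_mul_right sq_le hW

lemma logb_two_pow_card_div_card_nonneg (hX : X.Nonempty) :
    0 ≤ Real.logb 2 (2 ^ Fintype.card ι / #X) := by
  have hX' : (0 : ℝ) < #X := mod_cast hX.card_pos
  have hcard : #X ≤ 2 ^ Fintype.card ι := by simpa using card_le_univ X
  refine Real.logb_nonneg one_lt_two ?_
  rw [one_le_div₀ hX']
  exact_mod_cast hcard

lemma sum_inv_pow_card_mul_sq_parityBias_le_two (hX : X.Nonempty) {k : ℕ} (hk : k ≠ 0)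
    (hkX : Real.logb 2 (2 ^ Fintype.card ι / #X) ≤ k) :
    ∑ S, ((2 * k - 1 : ℝ) ^ #S)⁻¹ * parityBias X S ^ 2 ≤ 2 := by
  refine le_of_pow_le_pow_left₀ hk zero_le_two ((kkl_inequality hX k).trans ?_)
  rw [← Real.rpow_natCast 2 k]
  exact (Real.logb_le_iff_le_rpow one_lt_two (by positivity)).mp hkX

theorem level_inequality (hX : X.Nonempty) (d : ℕ) :
    ∑ S ∈ powersetCard d univ, parityBias X S ^ 2
      ≤ 2 * (1 + 2 * Real.logb 2 (2 ^ Fintype.card ι / #X)) ^ d := by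
  set L := Real.logb 2 (2 ^ Fintype.card ι / #X)
  have hL : 0 ≤ L := logb_two_pow_card_div_card_nonneg hX
  set k := ⌊L⌋₊ + 1 with hk
  have hLk : L ≤ k := mod_cast (Nat.lt_floor_add_one L).le
  have hρ_eq : (2 * k - 1 : ℝ) = 1 + 2 * ⌊L⌋₊ := by
    rw [hk]
    push_cast
    ring
  have hρ_pos : (0 : ℝ) < 2 * k - 1 := by
    rw [hρ_eq]
    positivity
  have hρ_le : (2 * k - 1 : ℝ) ≤ 1 + 2 * L := by
    rw [hρ_eq]
    gcongr
    exact Nat.floor_le hL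
  calc ∑ S ∈ powersetCard d univ, parityBias X S ^ 2
      ≤ (2 * k - 1 : ℝ) ^ d * ∑ S, ((2 * k - 1 : ℝ) ^ #S)⁻¹ * parityBias X S ^ 2 :=
        sum_powersetCard_le_pow_mul_sum hρ_pos (fun S ↦ sq_nonneg (parityBias X S)) d
    _ ≤ (1 + 2 * L) ^ d * 2 := by
        gcongr
        exact sum_inv_pow_card_mul_sq_parityBias_le_two hX (by omega) hLk
    _ = 2 * (1 + 2 * L) ^ d := mul_comm _ _

end Fourier

end BooleanCube

theorem level_two_fourier_weight_bound_general {ι : Type*} [Fintype ι] [DecidableEq ι]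
    {X : Finset (ι → Bool)} (hX : X.Nonempty) :
    (∑ i, ∑ j, if i ≠ j then
        ((∑ x ∈ X, if xor (x i) (x j) then (-1 : ℝ) else 1) / #X) ^ 2 else 0)
      ≤ 16 * (1 + Real.logb 2 (2 ^ Fintype.card ι / #X)) ^ 2 := by
  have level_two := BooleanCube.level_inequality hX 2
  have hL := BooleanCube.logb_two_pow_card_div_card_nonneg hX
  set L := Real.logb 2 (2 ^ Fintype.card ι / #X)
  calc _ = ∑ p ∈ univ.offDiag, BooleanCube.parityBias X {p.1, p.2} ^ 2 := by
        rw [← sum_product', univ_product_univ, ← sum_filter]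
        refine sum_congr (by ext; simp) fun p hp ↦ ?_
        simp only [BooleanCube.parityBias, expect_eq_sum_div_card,
          BooleanCube.walsh_pair (mem_offDiag.mp hp).2.2]
    _ = 2 * ∑ S ∈ powersetCard 2 univ, BooleanCube.parityBias X S ^ 2 := by
        rw [BooleanCube.sum_offDiag_pair univ fun S ↦ BooleanCube.parityBias X S ^ 2,
          nsmul_eq_mul, Nat.cast_ofNat]
    _ ≤ 2 * (2 * (1 + 2 * L) ^ 2) := by gcongr
    _ ≤ 2 * (2 * (2 * (1 + L)) ^ 2) := by
        gcongr
        linarith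
    _ = 16 * (1 + L) ^ 2 := by ring

/-- For every nonempty `X ⊆ {0,1}^n` of density `p = |X|/2^n`, with
`β_{ij}` the bias of the parity `x_i ⊕ x_j` over a uniform `x ∈ X`, one has
`Σ_{i≠j} β_{ij}² ≤ C·(1 + log₂(1/p))²` for a universal constant `C > 0`
(a consequence of the KKL inequality). -/
theorem level_two_fourier_weight_bound :
    ∃ C : ℝ, 0 < C ∧
      ∀ (n : ℕ), 0 < n →
      ∀ (X : Finset (Fin n → Bool)), X.Nonempty →
        (∑ i : Fin n, ∑ j : Fin n,
            if i ≠ j then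
              ((∑ x ∈ X, if xor (x i) (x j) then (-1 : ℝ) else 1) / X.card) ^ 2
            else 0)
          ≤ C * (1 + Real.logb 2 ((2 : ℝ) ^ n / X.card)) ^ 2 := by
  refine ⟨16, by norm_num, fun n _ X hX ↦ ?_⟩
  simpa only [Fintype.card_fin] using level_two_fourier_weight_bound_general hX
end

section
/- There exists a universal constant C > 0 such that for every n = 2^k and every deterministic strategy for the non-local Hidden Matching game HM_nl(n) (a function A : {0,1}^n → {0,1}^k for Alice, and for Bob a function assigning to each perfect matching M of {0,1}^k a pair (i,j) ∈ M and a bit d), the winning probability p = Pr[(A(x)·(i⊕j)) ⊕ d = x_i ⊕ x_j] over uniformly random x and M satisfies |p − 1/2| ≤ C·(log n)/√n. -/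
open scoped Classical
open Finset

/-- Inner product mod 2 on `{0,1}^k`, as a Boolean. -/
def bdot {k : ℕ} (a b : Fin k → Bool) : Bool :=
  decide ((Finset.univ.filter fun t => a t && b t).card % 2 = 1)

/-- Bitwise XOR on `{0,1}^k`. -/
def bxor {k : ℕ} (a b : Fin k → Bool) : Fin k → Bool := fun t => xor (a t) (b t)

/-- A perfect matching on `{0,1}^k`, represented as a fixed-point-free involution:
the pair `(i, M i)` is matched for every `i`. -/
def MatchingV (k : ℕ) : Type :=
  {M : (Fin k → Bool) → (Fin k → Bool) // (∀ i, M (M i) = i) ∧ ∀ i, M i ≠ i}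

noncomputable instance (k : ℕ) : Fintype (MatchingV k) :=
  Subtype.fintype _

/-! Write `y = x ⊕ (a · i)ᵢ` for Alice's input masked by the Hadamard codeword of her answer
`a = A x`. Since `a · (i ⊕ j) = a · i ⊕ a · j`, the players win iff `d = yᵢ ⊕ yⱼ`, so their
advantage on the edge `{i, j}` is half the absolute value of the Walsh coefficient at `{i, j}` of
the distribution of `y`. As `y` and `a` determine `x`, this distribution has density at most
`2 ^ k = n` with respect to the uniform one, and the level-2 inequality (a consequence of
hypercontractivity, used with exponent `2k`) bounds the sum of the squares of these coefficients
over all pairs by `O(k²) = O(log² n)`. A fixed pair is an edge of a random perfect matching with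
probability `1 / (n - 1)`, so the mean square advantage is `O(log² n / n)`, wherever Bob chooses
his edge. -/

open scoped BigOperators

section Expectation
variable {ι : Type*}

lemma expect_add_pow_le {s : Finset ι} {f g : ι → ℝ} {a b : ℝ} {r : ℕ} (hr : r ≠ 0)
    (hf : ∀ i ∈ s, 0 ≤ f i) (hg : ∀ i ∈ s, 0 ≤ g i) (ha : 0 ≤ a) (hb : 0 ≤ b)
    (hfa : 𝔼 i ∈ s, f i ^ r ≤ a ^ r) (hgb : 𝔼 i ∈ s, g i ^ r ≤ b ^ r) :
    𝔼 i ∈ s, (f i + g i) ^ r ≤ (a + b) ^ r := by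
  have root_sum_le {h : ι → ℝ} {c : ℝ} (hh : ∀ i ∈ s, 0 ≤ h i) (hc : 0 ≤ c)
      (hhc : 𝔼 i ∈ s, h i ^ r ≤ c ^ r) :
      (∑ i ∈ s, h i ^ r) ^ (1 / r : ℝ) ≤ (#s : ℝ) ^ (1 / r : ℝ) * c := by
    rw [← Real.pow_rpow_inv_natCast hc hr, ← one_div,
      ← Real.mul_rpow (by positivity) (by positivity), ← card_mul_expect]
    have := expect_nonneg fun i hi ↦ pow_nonneg (hh i hi) r
    gcongr
  have hr1 : (1 : ℝ) ≤ r := Nat.one_le_cast.2 (Nat.one_le_iff_ne_zero.2 hr)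
  have minkowski := Real.Lp_add_le_of_nonneg s hr1 hf hg
  simp only [Real.rpow_natCast] at minkowski
  obtain rfl | hs := s.eq_empty_or_nonempty
  · simpa using by positivity
  rw [expect_eq_sum_div_card, div_le_iff₀' (by positivity),
    ← Real.rpow_le_rpow_iff (z := 1 / r)
      (sum_nonneg fun i hi ↦ pow_nonneg (add_nonneg (hf i hi) (hg i hi)) r)
      (by positivity) (by positivity),
    Real.mul_rpow (by positivity) (by positivity), one_div,
    Real.pow_rpow_inv_natCast (by positivity) hr, mul_add, ← one_div]
  exact minkowski.trans (add_le_add (root_sum_le hf ha hfa) (root_sum_le hg hb hgb))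

lemma expect_mul_pow_le_of_even [Fintype ι] {f : ι → ℝ} (hf : ∀ i, 0 ≤ f i) (hf1 : 𝔼 i, f i = 1)
    (g : ι → ℝ) {n : ℕ} (hn : Even n) :
    (𝔼 i, f i * g i) ^ n ≤ 𝔼 i, f i * g i ^ n := by
  rw [Fintype.expect_eq_sum_div_card, sum_div] at hf1
  simp only [Fintype.expect_eq_sum_div_card, sum_div, mul_div_right_comm _ _ (Fintype.card ι : ℝ)]
  exact Real.pow_arith_mean_le_arith_mean_pow_of_even _ _ _
    (fun i _ ↦ div_nonneg (hf i) (by positivity)) hf1 hn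

lemma expect_card_fiber_mul [Fintype ι] [DecidableEq ι] (φ : ι → ι) (g : ι → ℝ) :
    𝔼 y, #{x | φ x = y} * g y = 𝔼 x, g (φ x) := by
  simp only [Fintype.expect_eq_sum_div_card, ← nsmul_eq_mul, ← sum_const]
  rw [sum_fiberwise']

end Expectation

section TwoPoint

lemma choose_two_mul_le (r j : ℕ) :
    (2 * r).choose (2 * j) ≤ (2 * r - 1) ^ j * r.choose j := by
  induction j with
  | zero => simp
  | succ j ih =>
    have h₁ := Nat.choose_succ_right_eq (2 * r) (2 * j)
    have h₂ := Nat.choose_succ_right_eq (2 * r) (2 * j + 1)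
    have h₃ := Nat.choose_succ_right_eq r j
    have hfactor : 2 * r - (2 * j + 1) ≤ (2 * r - 1) * (2 * j + 1) :=
      (Nat.sub_le_sub_left (by omega) _).trans (Nat.le_mul_of_pos_right _ (by omega))
    refine Nat.le_of_mul_le_mul_right (c := (2 * j + 1 + 1) * (2 * j + 1)) ?_ (by positivity)
    calc (2 * r).choose (2 * (j + 1)) * ((2 * j + 1 + 1) * (2 * j + 1))
        = (2 * r).choose (2 * j + 1 + 1) * (2 * j + 1 + 1) * (2 * j + 1) := by ring_nf
      _ = (2 * r).choose (2 * j + 1) * (2 * j + 1) * (2 * r - (2 * j + 1)) := by rw [h₂]; ring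
      _ = (2 * r).choose (2 * j) * (2 * (r - j)) * (2 * r - (2 * j + 1)) := by
        rw [h₁, ← Nat.mul_sub 2]
      _ ≤ (2 * r - 1) ^ j * r.choose j * (2 * (r - j)) * ((2 * r - 1) * (2 * j + 1)) := by gcongr
      _ = 2 * (2 * r - 1) ^ j * (r.choose j * (r - j)) * ((2 * r - 1) * (2 * j + 1)) := by ring
      _ = (2 * r - 1) ^ (j + 1) * r.choose (j + 1) * ((2 * j + 1 + 1) * (2 * j + 1)) := by
        rw [← h₃]; ring

lemma sum_range_two_mul_add_one {M : Type*} [AddCommMonoid M] (g : ℕ → M) (r : ℕ) :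
    ∑ m ∈ range (2 * r + 1), g m
      = ∑ j ∈ range (r + 1), g (2 * j) + ∑ j ∈ range r, g (2 * j + 1) := by
  induction r with
  | zero => simp
  | succ r ih =>
    rw [show 2 * (r + 1) + 1 = 2 * r + 1 + 1 + 1 by ring, sum_range_succ, sum_range_succ, ih,
      sum_range_succ _ (r + 1), sum_range_succ (fun j ↦ g (2 * j + 1)) r,
      show 2 * (r + 1) = 2 * r + 1 + 1 by ring]
    abel

lemma add_pow_add_sub_pow_two_mul {R : Type*} [CommRing R] (a b : R) (r : ℕ) :
    (a + b) ^ (2 * r) + (a - b) ^ (2 * r)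
      = 2 * ∑ j ∈ range (r + 1), (2 * r).choose (2 * j) * ((b ^ 2) ^ j * (a ^ 2) ^ (r - j)) := by
  rw [add_comm a b, sub_eq_neg_add, add_pow, add_pow, sum_range_two_mul_add_one,
    sum_range_two_mul_add_one, mul_sum]
  have even_terms (c : R) (hc : c ^ 2 = b ^ 2) (j : ℕ) :
      c ^ (2 * j) * a ^ (2 * r - 2 * j) * (2 * r).choose (2 * j)
        = (2 * r).choose (2 * j) * ((b ^ 2) ^ j * (a ^ 2) ^ (r - j)) := by
    rw [pow_mul, hc, ← Nat.mul_sub, pow_mul a, mul_comm]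
  simp only [even_terms b rfl, even_terms (-b) (neg_sq b), (odd_two_mul_add_one _).neg_pow, neg_mul,
    sum_neg_distrib, two_mul ((Nat.choose _ _ : R) * _), sum_add_distrib]
  ring

lemma cast_two_mul_sub_one {r : ℕ} (hr : r ≠ 0) : ((2 * r - 1 : ℕ) : ℝ) = 2 * r - 1 := by
  rw [Nat.cast_pred (by omega), Nat.cast_mul, Nat.cast_ofNat]

/-- The two-point inequality: hypercontractivity from `L²` to `L²ʳ` on a single bit. -/
lemma add_pow_add_sub_pow_two_mul_le (a b : ℝ) {r : ℕ} (hr : r ≠ 0) :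
    (a + b) ^ (2 * r) + (a - b) ^ (2 * r) ≤ 2 * (a ^ 2 + (2 * r - 1) * b ^ 2) ^ r := by
  rw [add_pow_add_sub_pow_two_mul, add_comm (a ^ 2), add_pow]
  refine mul_le_mul_of_nonneg_left (sum_le_sum fun j _ ↦ ?_) two_pos.le
  calc ((2 * r).choose (2 * j) : ℝ) * ((b ^ 2) ^ j * (a ^ 2) ^ (r - j))
      ≤ ((2 * r - 1 : ℕ) ^ j * r.choose j) * ((b ^ 2) ^ j * (a ^ 2) ^ (r - j)) := by
        gcongr; exact_mod_cast choose_two_mul_le r j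
    _ = ((2 * r - 1) * b ^ 2) ^ j * (a ^ 2) ^ (r - j) * r.choose j := by
        rw [cast_two_mul_sub_one hr, mul_pow]; ring

end TwoPoint

/-- The sign `(-1) ^ b` of a bit `b`. -/
def bitSign (b : Bool) : ℝ := if b then -1 else 1

lemma bitSign_not (b : Bool) : bitSign (!b) = -bitSign b := by cases b <;> simp [bitSign]

lemma bitSign_sq (b : Bool) : bitSign b ^ 2 = 1 := by cases b <;> simp [bitSign]

lemma bitSign_xor (a b : Bool) : bitSign (xor a b) = bitSign a * bitSign b := by
  cases a <;> cases b <;> simp [bitSign]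

lemma ite_eq_bitSign (a b : Bool) :
    (if a = b then 1 else 0 : ℝ) = 1 / 2 + bitSign a * bitSign b / 2 := by
  cases a <;> cases b <;> norm_num [bitSign]

section Cube
variable {V : Type*}

/-- The Walsh function `χ_S(x) = ∏ i ∈ S, (-1) ^ x i` on the discrete cube `V → Bool`. -/
def walsh (S : Finset V) (x : V → Bool) : ℝ := ∏ i ∈ S, bitSign (x i)

variable [DecidableEq V]

lemma walsh_insert {m : V} {S : Finset V} (hm : m ∉ S) (x : V → Bool) :
    walsh (insert m S) x = bitSign (x m) * walsh S x := prod_insert hm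

/-- The neighbour of the point `x` of the discrete cube in direction `m`. -/
def flipBit (m : V) (x : V → Bool) : V → Bool := Function.update x m !(x m)

lemma flipBit_apply_self (m : V) (x : V → Bool) : flipBit m x m = !x m := Function.update_self ..

lemma flipBit_involutive (m : V) : Function.Involutive (flipBit m) := fun x ↦ by simp [flipBit]

lemma walsh_flipBit_of_notMem {m : V} {S : Finset V} (hm : m ∉ S) (x : V → Bool) :
    walsh S (flipBit m x) = walsh S x :=
  prod_congr rfl fun i hi ↦ by rw [flipBit, Function.update_of_ne (ne_of_mem_of_not_mem hi hm)]

variable [Fintype V]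

/-- The Walsh (Fourier) coefficient of `f` at `S`, with respect to the uniform probability measure
on the cube. -/
noncomputable def walshCoeff (f : (V → Bool) → ℝ) (S : Finset V) : ℝ := 𝔼 x, f x * walsh S x

lemma expect_add_bitSign_mul_pow_le {m : V} {F G : (V → Bool) → ℝ}
    (hF : ∀ x, F (flipBit m x) = F x) (hG : ∀ x, G (flipBit m x) = G x) {r : ℕ} (hr : r ≠ 0) :
    𝔼 x, (F x + bitSign (x m) * G x) ^ (2 * r) ≤ 𝔼 x, (F x ^ 2 + (2 * r - 1) * G x ^ 2) ^ r := by
  have expect_flip : 𝔼 x, (F x + bitSign (x m) * G x) ^ (2 * r)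
      = 𝔼 x, (F x - bitSign (x m) * G x) ^ (2 * r) :=
    Fintype.expect_equiv (flipBit_involutive m).toPerm _ _ fun x ↦ by
      simp [hF, hG, flipBit_apply_self, bitSign_not]
  have two_point : 𝔼 x, ((F x + bitSign (x m) * G x) ^ (2 * r)
        + (F x - bitSign (x m) * G x) ^ (2 * r))
      ≤ 𝔼 x, 2 * (F x ^ 2 + (2 * r - 1) * G x ^ 2) ^ r :=
    expect_le_expect fun x _ ↦ by
      simpa [mul_pow, bitSign_sq] using
        add_pow_add_sub_pow_two_mul_le (F x) (bitSign (x m) * G x) hr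
  rw [expect_add_distrib, ← expect_flip, ← two_mul, ← mul_expect] at two_point
  exact le_of_mul_le_mul_left two_point two_pos

/-- The Bonami–Beckner hypercontractive inequality, from `L²` to `L²ʳ`. -/
theorem expect_sum_mul_walsh_pow_le {r : ℕ} (hr : r ≠ 0) (U : Finset V) (c : Finset V → ℝ) :
    𝔼 x, (∑ S ∈ U.powerset, c S * walsh S x) ^ (2 * r)
      ≤ (∑ S ∈ U.powerset, (2 * r - 1) ^ #S * c S ^ 2) ^ r := by
  have hK : (0 : ℝ) ≤ 2 * r - 1 := cast_two_mul_sub_one hr ▸ Nat.cast_nonneg _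
  induction U using Finset.induction_on generalizing c with
  | empty => simp [walsh, pow_mul]
  | insert m U hm ih =>
    have notMem {S} (hS : S ∈ U.powerset) : m ∉ S := notMem_mono (mem_powerset.1 hS) hm
    have walsh_invariant (c : Finset V → ℝ) (x : V → Bool) :
        ∑ S ∈ U.powerset, c S * walsh S (flipBit m x) = ∑ S ∈ U.powerset, c S * walsh S x :=
      sum_congr rfl fun S hS ↦ by rw [walsh_flipBit_of_notMem (notMem hS)]
    have weight_nonneg (c : Finset V → ℝ) :
        0 ≤ ∑ S ∈ U.powerset, (2 * r - 1 : ℝ) ^ #S * c S ^ 2 := by positivity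
    simp only [sum_powerset_insert hm]
    calc 𝔼 x, (∑ S ∈ U.powerset, c S * walsh S x
          + ∑ S ∈ U.powerset, c (insert m S) * walsh (insert m S) x) ^ (2 * r)
        = 𝔼 x, (∑ S ∈ U.powerset, c S * walsh S x
          + bitSign (x m) * ∑ S ∈ U.powerset, c (insert m S) * walsh S x) ^ (2 * r) := by
          simp only [mul_sum]
          congr! 4 with x _ S hS
          rw [walsh_insert (notMem hS), mul_left_comm]
      _ ≤ 𝔼 x, ((∑ S ∈ U.powerset, c S * walsh S x) ^ 2
          + (2 * r - 1) * (∑ S ∈ U.powerset, c (insert m S) * walsh S x) ^ 2) ^ r :=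
          expect_add_bitSign_mul_pow_le (walsh_invariant c)
            (walsh_invariant fun S ↦ c (insert m S)) hr
      _ ≤ (∑ S ∈ U.powerset, (2 * r - 1) ^ #S * c S ^ 2
          + (2 * r - 1) * ∑ S ∈ U.powerset, (2 * r - 1) ^ #S * c (insert m S) ^ 2) ^ r := by
          refine expect_add_pow_le hr (fun x _ ↦ sq_nonneg _) (fun x _ ↦ by positivity)
            (weight_nonneg c) (mul_nonneg hK (weight_nonneg _)) ?_ ?_
          · simpa only [← pow_mul] using ih c
          · simp only [mul_pow _ _ r, ← pow_mul, ← mul_expect]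
            gcongr
            exact ih _
      _ = _ := by
          rw [mul_sum]
          congr! 3 with S hS
          rw [card_insert_of_notMem (notMem hS), pow_succ' (2 * r - 1 : ℝ), mul_assoc]

lemma expect_sum_powersetCard_mul_walsh_pow_le {r : ℕ} (hr : r ≠ 0) (d : ℕ) (c : Finset V → ℝ) :
    𝔼 x, (∑ S ∈ powersetCard d univ, c S * walsh S x) ^ (2 * r)
      ≤ ((2 * r - 1) ^ d * ∑ S ∈ powersetCard d univ, c S ^ 2) ^ r := by
  have h := expect_sum_mul_walsh_pow_le hr univ fun S ↦ if #S = d then c S else 0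
  simp only [ite_mul, zero_mul, ite_pow, zero_pow two_ne_zero, mul_ite, mul_zero, ← sum_filter,
    ← powersetCard_eq_filter] at h
  refine h.trans_eq ?_
  rw [mul_sum]
  congr 1
  exact sum_congr rfl fun S hS ↦ by rw [(mem_powersetCard.1 hS).2]

/-- The level-`d` inequality, with a free exponent `r` to be optimised. -/
theorem sum_sq_walshCoeff_pow_le {f : (V → Bool) → ℝ} {L : ℝ} (hf : ∀ x, 0 ≤ f x)
    (hf1 : 𝔼 x, f x = 1) (hfL : ∀ x, f x ≤ L) {r : ℕ} (hr : r ≠ 0) (d : ℕ) :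
    (∑ S ∈ powersetCard d univ, walshCoeff f S ^ 2) ^ r ≤ L * ((2 * r - 1) ^ d) ^ r := by
  set W := ∑ S ∈ powersetCard d univ, walshCoeff f S ^ 2
  let Q (x : V → Bool) : ℝ := ∑ S ∈ powersetCard d univ, walshCoeff f S * walsh S x
  have hW : 𝔼 x, f x * Q x = W := by
    simp only [Q, W, mul_sum, expect_sum_comm]
    refine sum_congr rfl fun S _ ↦ ?_
    simp only [mul_left_comm (f _), ← mul_expect]
    exact (sq _).symm
  have hL : 0 ≤ L := (hf fun _ ↦ false).trans (hfL _)
  have hW0 : 0 ≤ W := sum_nonneg fun S _ ↦ sq_nonneg _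
  have W_pow_le : W ^ r * W ^ r ≤ L * ((2 * r - 1) ^ d) ^ r * W ^ r := by
    calc W ^ r * W ^ r = (𝔼 x, f x * Q x) ^ (2 * r) := by rw [hW]; ring
      _ ≤ 𝔼 x, f x * Q x ^ (2 * r) := expect_mul_pow_le_of_even hf hf1 Q (even_two_mul r)
      _ ≤ 𝔼 x, L * Q x ^ (2 * r) := expect_le_expect fun x _ ↦
          mul_le_mul_of_nonneg_right (hfL x) ((even_two_mul r).pow_nonneg _)
      _ = L * 𝔼 x, Q x ^ (2 * r) := (mul_expect _ _ _).symm
      _ ≤ L * ((2 * r - 1) ^ d * W) ^ r :=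
          mul_le_mul_of_nonneg_left (expect_sum_powersetCard_mul_walsh_pow_le hr d _) hL
      _ = _ := by rw [mul_pow]; ring
  obtain hW0 | hW0 := hW0.eq_or_lt
  · rw [← hW0, zero_pow hr]
    have : (0 : ℝ) ≤ 2 * r - 1 := cast_two_mul_sub_one hr ▸ Nat.cast_nonneg _
    positivity
  · exact le_of_mul_le_mul_right W_pow_le (by positivity)

theorem sum_sq_expect_walsh_comp_pow_le {φ : (V → Bool) → V → Bool} {L : ℕ}
    (hφ : ∀ y, #{x | φ x = y} ≤ L) {r : ℕ} (hr : r ≠ 0) (d : ℕ) :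
    (∑ S ∈ powersetCard d univ, (𝔼 x, walsh S (φ x)) ^ 2) ^ r ≤ L * ((2 * r - 1) ^ d) ^ r := by
  simp only [← expect_card_fiber_mul φ]
  refine sum_sq_walshCoeff_pow_le (f := fun y ↦ #{x | φ x = y}) (fun y ↦ by positivity) ?_
    (fun y ↦ by exact_mod_cast hφ y) hr d
  simpa using expect_card_fiber_mul φ 1

end Cube

section Alice
variable {k : ℕ} (A : ((Fin k → Bool) → Bool) → Fin k → Bool)

lemma bitSign_bdot (a b : Fin k → Bool) : bitSign (bdot a b) = ∏ t, bitSign (a t && b t) := by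
  simp only [bitSign, bdot, decide_eq_true_eq, prod_ite, prod_const, one_pow, mul_one]
  rcases Nat.mod_two_eq_zero_or_one (#{t | (a t && b t) = true}) with h | h
  · rw [if_neg (by omega), (Nat.even_iff.2 h).neg_one_pow]
  · rw [if_pos h, (Nat.odd_iff.2 h).neg_one_pow]

lemma bitSign_bdot_bxor (a i j : Fin k → Bool) :
    bitSign (bdot a (bxor i j)) = bitSign (bdot a i) * bitSign (bdot a j) := by
  simp only [bitSign_bdot, ← prod_mul_distrib, ← bitSign_xor, bxor, Bool.and_xor_distrib_left]

/-- Alice's input masked by the Hadamard codeword of her answer. -/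
def maskedInput (x : (Fin k → Bool) → Bool) : (Fin k → Bool) → Bool :=
  fun i ↦ xor (x i) (bdot (A x) i)

lemma card_maskedInput_eq_le (y : (Fin k → Bool) → Bool) : #{x | maskedInput A x = y} ≤ 2 ^ k := by
  have injOn : Set.InjOn A {x | maskedInput A x = y} := by
    rintro x hx x' hx' hA
    ext i
    have h : maskedInput A x i = maskedInput A x' i := congrFun (hx.trans hx'.symm) i
    simpa [maskedInput, hA] using h
  calc #{x | maskedInput A x = y} ≤ #(univ : Finset (Fin k → Bool)) :=
        card_le_card_of_injOn A (by simp) (by simpa using injOn)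
    _ = 2 ^ k := by simp

/-- The Walsh coefficient at `S` of the distribution of Alice's masked input: for `S = {i, j}`, the
correlation of the parity of `x i` and `x j` with Alice's prediction `A x · (i ⊕ j)`. -/
noncomputable def bias (S : Finset (Fin k → Bool)) : ℝ := 𝔼 x, walsh S (maskedInput A x)

lemma sum_sq_bias_le (hk : k ≠ 0) :
    ∑ S ∈ powersetCard 2 univ, bias A S ^ 2 ≤ 2 * (2 * k - 1) ^ 2 := by
  refine le_of_pow_le_pow_left₀ hk (by positivity) ?_
  rw [mul_pow]
  exact_mod_cast sum_sq_expect_walsh_comp_pow_le (card_maskedInput_eq_le A) hk 2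

lemma walsh_pair_maskedInput {i j : Fin k → Bool} (hij : i ≠ j) (x : (Fin k → Bool) → Bool) :
    walsh {i, j} (maskedInput A x)
      = bitSign (bdot (A x) (bxor i j)) * bitSign (xor (x i) (x j)) := by
  rw [walsh, prod_pair hij, maskedInput, maskedInput, bitSign_bdot_bxor]
  simp only [bitSign_xor]
  ring

lemma expect_win_eq {i j : Fin k → Bool} (hij : i ≠ j) (d : Bool) :
    𝔼 x, (if xor (bdot (A x) (bxor i j)) d = xor (x i) (x j) then 1 else 0 : ℝ)
      = 1 / 2 + bitSign d * bias A {i, j} / 2 := by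
  simp only [ite_eq_bitSign, bias, expect_add_distrib, Fintype.expect_const, mul_expect, expect_div,
    walsh_pair_maskedInput A hij, bitSign_xor _ d]
  congr 1
  exact expect_congr rfl fun x _ ↦ by ring

end Alice

namespace MatchingV
variable {k : ℕ}

lemma apply_apply (M : MatchingV k) (i : Fin k → Bool) : M.1 (M.1 i) = i := M.2.1 i

lemma apply_ne (M : MatchingV k) (i : Fin k → Bool) : M.1 i ≠ i := M.2.2 i

lemma nonempty (hk : k ≠ 0) : Nonempty (MatchingV k) :=
  ⟨fun i t ↦ !i t, fun i ↦ by simp, fun i h ↦ by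
    simpa using congrFun h ⟨0, Nat.pos_of_ne_zero hk⟩⟩

/-- Relabelling the vertices of a matching by a permutation. -/
def relabel (σ : Equiv.Perm (Fin k → Bool)) : Equiv.Perm (MatchingV k) where
  toFun M := ⟨σ ∘ M.1 ∘ σ.symm, fun i ↦ by simp [apply_apply],
    fun i h ↦ M.apply_ne (σ.symm i) (σ.eq_symm_apply.2 h)⟩
  invFun M := ⟨σ.symm ∘ M.1 ∘ σ, fun i ↦ by simp [apply_apply],
    fun i h ↦ M.apply_ne (σ i) (σ.symm_apply_eq.1 h)⟩
  left_inv M := Subtype.ext <| by ext; simp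
  right_inv M := Subtype.ext <| by ext; simp

lemma relabel_apply (σ : Equiv.Perm (Fin k → Bool)) (M : MatchingV k) (i : Fin k → Bool) :
    (relabel σ M).1 i = σ (M.1 (σ.symm i)) := rfl

lemma card_apply_eq_congr {i j j' : Fin k → Bool} (hj : j ≠ i) (hj' : j' ≠ i) :
    #{M : MatchingV k | M.1 i = j} = #{M : MatchingV k | M.1 i = j'} :=
  card_equiv (relabel (Equiv.swap j j')) fun M ↦ by
    simp [relabel_apply, Equiv.swap_apply_of_ne_of_ne hj.symm hj'.symm, Equiv.swap_apply_eq_iff]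

lemma card_apply_eq_mul {i j : Fin k → Bool} (hj : j ≠ i) :
    (2 ^ k - 1) * #{M : MatchingV k | M.1 i = j} = Fintype.card (MatchingV k) := by
  have no_fixed_point : #{M : MatchingV k | M.1 i = i} = 0 := by
    simpa using fun M : MatchingV k ↦ M.apply_ne i
  calc (2 ^ k - 1) * #{M : MatchingV k | M.1 i = j}
      = ∑ j' ∈ univ.erase i, #{M : MatchingV k | M.1 i = j'} := by
        rw [sum_congr rfl fun j' hj' ↦ card_apply_eq_congr (ne_of_mem_erase hj') hj]
        simp
    _ = ∑ j', #{M : MatchingV k | M.1 i = j'} := sum_erase _ no_fixed_point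
    _ = Fintype.card (MatchingV k) := (card_eq_sum_card_fiberwise fun _ _ ↦ mem_univ _).symm

/-- The edge set of a matching, as two-element sets of vertices. -/
def edges (M : MatchingV k) : Finset (Finset (Fin k → Bool)) := univ.image fun i ↦ {i, M.1 i}

lemma pair_apply_mem_edges (M : MatchingV k) (i : Fin k → Bool) : {i, M.1 i} ∈ M.edges :=
  mem_image_of_mem _ (mem_univ i)

lemma pair_mem_edges_iff {M : MatchingV k} {i j : Fin k → Bool} :
    {i, j} ∈ M.edges ↔ M.1 i = j := by
  refine ⟨fun h ↦ ?_, fun h ↦ h ▸ M.pair_apply_mem_edges i⟩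
  obtain ⟨l, -, hl⟩ := mem_image.1 h
  have hl' : ({l, M.1 l} : Set (Fin k → Bool)) = {i, j} := by
    rw [← coe_pair, hl, coe_pair]
  obtain ⟨rfl, rfl⟩ | ⟨rfl, rfl⟩ := Set.pair_eq_pair_iff.1 hl'
  · rfl
  · exact M.apply_apply l

lemma card_mem_edges_mul {S : Finset (Fin k → Bool)} (hS : #S = 2) :
    (2 ^ k - 1) * #{M : MatchingV k | S ∈ M.edges} = Fintype.card (MatchingV k) := by
  obtain ⟨i, j, hij, rfl⟩ := card_eq_two.1 hS
  simp only [pair_mem_edges_iff, card_apply_eq_mul hij.symm]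

lemma mul_expect_pair_apply_le [Nonempty (MatchingV k)] {g : Finset (Fin k → Bool) → ℝ}
    (hg : ∀ S, 0 ≤ g S) (f : MatchingV k → Fin k → Bool) :
    (2 ^ k - 1) * 𝔼 M : MatchingV k, g {f M, M.1 (f M)} ≤ ∑ S ∈ powersetCard 2 univ, g S := by
  have cast_pred : ((2 ^ k - 1 : ℕ) : ℝ) = 2 ^ k - 1 := by
    rw [Nat.cast_pred (by positivity), Nat.cast_pow, Nat.cast_ofNat]
  rw [← cast_pred]
  calc ((2 ^ k - 1 : ℕ) : ℝ) * 𝔼 M : MatchingV k, g {f M, M.1 (f M)}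
      ≤ (2 ^ k - 1 : ℕ) * 𝔼 M : MatchingV k,
          ∑ S ∈ powersetCard 2 univ, if S ∈ M.edges then g S else 0 := by
        gcongr with M
        have mem : {f M, M.1 (f M)} ∈ powersetCard 2 (univ : Finset (Fin k → Bool)) :=
          mem_powersetCard.2 ⟨subset_univ _, card_pair (M.apply_ne _).symm⟩
        refine (if_pos (M.pair_apply_mem_edges (f M))).ge.trans
          (single_le_sum (f := fun S ↦ if S ∈ M.edges then g S else 0) (fun S _ ↦ ?_) mem)
        split_ifs <;> simp [hg]
    _ = ∑ S ∈ powersetCard 2 univ, g S := by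
        rw [expect_sum_comm, mul_sum]
        refine sum_congr rfl fun S hS ↦ ?_
        have card_eq : ((2 ^ k - 1 : ℕ) : ℝ) * #{M : MatchingV k | S ∈ M.edges}
            = Fintype.card (MatchingV k) := mod_cast card_mem_edges_mul (mem_powersetCard.1 hS).2
        rw [Fintype.expect_eq_sum_div_card, ← sum_filter, sum_const, nsmul_eq_mul, ← mul_div_assoc,
          ← mul_assoc, card_eq, mul_div_cancel_left₀ _ (by positivity)]

end MatchingV

section Game
variable {k : ℕ} (A : ((Fin k → Bool) → Bool) → Fin k → Bool)
  (Bob : MatchingV k → (Fin k → Bool) × Bool)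

/-- The probability that the strategy `(A, Bob)` wins; Bob outputs the edge of the matching `M` at
the vertex `(Bob M).1`, and the bit `(Bob M).2`. -/
noncomputable def winProb : ℝ :=
  𝔼 M : MatchingV k, 𝔼 x : (Fin k → Bool) → Bool,
    if xor (bdot (A x) (bxor (Bob M).1 (M.1 (Bob M).1))) (Bob M).2
      = xor (x (Bob M).1) (x (M.1 (Bob M).1)) then 1 else 0

lemma winProb_eq [Nonempty (MatchingV k)] :
    winProb A Bob
      = 1 / 2 + (𝔼 M, bitSign (Bob M).2 * bias A {(Bob M).1, M.1 (Bob M).1}) / 2 := by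
  simp only [winProb, expect_win_eq A (MatchingV.apply_ne _ _).symm, expect_add_distrib,
    Fintype.expect_const, expect_div]

lemma sq_winProb_sub_half_le [Nonempty (MatchingV k)] :
    (winProb A Bob - 1 / 2) ^ 2
      ≤ (𝔼 M : MatchingV k, bias A {(Bob M).1, M.1 (Bob M).1} ^ 2) / 4 := by
  have cauchy_schwarz := expect_mul_sq_le_sq_mul_sq univ (fun M ↦ bitSign (Bob M).2)
    fun M : MatchingV k ↦ bias A {(Bob M).1, M.1 (Bob M).1}
  simp only [bitSign_sq, Fintype.expect_const, one_mul] at cauchy_schwarz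
  rw [winProb_eq, add_sub_cancel_left, div_pow]
  linarith

theorem abs_winProb_sub_half_le (hk : k ≠ 0) :
    |winProb A Bob - 1 / 2| ≤ 2 * k / √(2 ^ k) := by
  have := MatchingV.nonempty hk
  have hk1 : (1 : ℝ) ≤ k := Nat.one_le_cast.2 (Nat.one_le_iff_ne_zero.2 hk)
  have two_le : (2 : ℝ) ≤ 2 ^ k := le_self_pow₀ one_le_two hk
  set p := winProb A Bob
  have mean_sq : (2 ^ k - 1) * (4 * (p - 1 / 2) ^ 2) ≤ 2 * (2 * k - 1) ^ 2 :=
    calc (2 ^ k - 1) * (4 * (p - 1 / 2) ^ 2)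
        ≤ (2 ^ k - 1) * 𝔼 M : MatchingV k, bias A {(Bob M).1, M.1 (Bob M).1} ^ 2 :=
          mul_le_mul_of_nonneg_left (by linarith [sq_winProb_sub_half_le A Bob]) (by linarith)
      _ ≤ ∑ S ∈ powersetCard 2 univ, bias A S ^ 2 :=
          MatchingV.mul_expect_pair_apply_le (fun S ↦ sq_nonneg (bias A S)) fun M ↦ (Bob M).1
      _ ≤ 2 * (2 * k - 1) ^ 2 := sum_sq_bias_le A hk
  rw [le_div_iff₀ (by positivity)]
  refine (sq_le_sq₀ (by positivity) (by positivity)).1 ?_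
  calc (|p - 1 / 2| * √(2 ^ k)) ^ 2 = 2 ^ k * (p - 1 / 2) ^ 2 := by
        rw [mul_pow, sq_abs, Real.sq_sqrt (by positivity), mul_comm]
    _ ≤ 2 * (2 ^ k - 1) * (p - 1 / 2) ^ 2 := by gcongr; linarith
    _ ≤ (2 * k - 1) ^ 2 := by linarith
    _ ≤ (2 * k) ^ 2 := by gcongr <;> linarith

end Game

/-- There is a universal constant `C > 0` such that for every `n = 2^k`
and every deterministic strategy for the non-local Hidden Matching game (Alice's
output function `A : {0,1}^n → {0,1}^k`; Bob's output, for each matching `M`, an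
index `i` (matched to `j = M i`) and a bit `d`), the winning probability `p` over
uniform `x` and `M` satisfies `|p − 1/2| ≤ C·(log n)/√n`. -/
theorem hidden_matching_nonlocal_classical_upper_bound :
    ∃ C : ℝ, 0 < C ∧
      ∀ k : ℕ, 1 ≤ k →
      ∀ (A : ((Fin k → Bool) → Bool) → (Fin k → Bool))
        (Bob : MatchingV k → (Fin k → Bool) × Bool),
        |(∑ x : (Fin k → Bool) → Bool, ∑ M : MatchingV k,
              if xor (bdot (A x) (bxor (Bob M).1 (M.1 (Bob M).1))) (Bob M).2
                  = xor (x (Bob M).1) (x (M.1 (Bob M).1))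
              then (1 : ℝ) else 0)
            / ((2 : ℝ) ^ (2 ^ k) * (Fintype.card (MatchingV k)))
          - 1 / 2|
        ≤ C * Real.log (2 ^ k) / Real.sqrt (2 ^ k) := by
  refine ⟨4, four_pos, fun k hk A Bob ↦ ?_⟩
  have hk0 : k ≠ 0 := Nat.one_le_iff_ne_zero.1 hk
  have two_mul_k_le : 2 * (k : ℝ) ≤ 4 * Real.log (2 ^ k) := by
    rw [Real.log_pow]
    nlinarith [Real.log_two_gt_d9, hk]
  calc _ = |winProb A Bob - 1 / 2| := by
        rw [sum_comm]
        simp [winProb, Fintype.expect_eq_sum_div_card, ← sum_div, div_div]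
    _ ≤ 2 * k / √(2 ^ k) := abs_winProb_sub_half_le A Bob hk0
    _ ≤ _ := by gcongr
end
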